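/- arXiv:1809.10607 — 6 statements merged into one kernel-verified Lean document; each statement's English description precedes it below -/
import Mathlib

section
/- Let f(x) = ∑_{n=0}^∞ a_n x^n and g(x) = ∑_{n=0}^∞ b_n x^n be power series with real coefficients a_n, b_n and radii of convergence R > 0 and R' > 0 respectively, and let h(x) = ∑_{n=0}^∞ a_n b_n x^n. Then for all real u, v with |u| < R and |v| < R', one has h(uv) = (1/(2π)) ∫_0^{2π} f(u e^{it}) g(v e^{-it}) dt, where on the right f and g denote the complex power series ∑ a_n z^n and ∑ b_n z^n evaluated at the complex points u e^{it} and v e^{-it}, and the integral is a complex integral (whose value is the real number h(uv)). -/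
open Real Complex intervalIntegral

/-!
On the unit circle `v e^{-it}` is `v z⁻¹`, so the integral is the circle average of the product of
a series in powers of `z` and a series in powers of `z⁻¹`. Absolute convergence allows averaging the
double series term by term, and the orthogonality relation that `z ^ k` has average `0` unless
`k = 0` leaves only its diagonal.
-/

section CircleAverage

variable {ι E : Type*} [NormedAddCommGroup E]

lemma hasSum_circleAverage_of_summable_bound [Countable ι] [NormedSpace ℝ E]
    {F : ι → ℂ → E} {f : ℂ → E} {bound : ι → ℝ} {c : ℂ} {r : ℝ}
    (hF_int : ∀ i, CircleIntegrable (F i) c r)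
    (hF_le : ∀ i, ∀ z ∈ Metric.sphere c |r|, ‖F i z‖ ≤ bound i)
    (h_bound : Summable bound)
    (hF_sum : ∀ z ∈ Metric.sphere c |r|, HasSum (F · z) (f z)) :
    HasSum (fun i => circleAverage (F i) c r) (circleAverage f c r) :=
  (intervalIntegral.hasSum_integral_of_dominated_convergence (fun i _ => bound i)
    (fun i => (hF_int i).def'.aestronglyMeasurable)
    (fun i => .of_forall fun t _ => hF_le i _ (circleMap_mem_sphere' c r t))
    (.of_forall fun _ _ => h_bound)
    intervalIntegrable_const
    (.of_forall fun t _ => hF_sum _ (circleMap_mem_sphere' c r t))).const_smul _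

lemma circleAverage_sub_zpow_smul [NormedSpace ℂ E] [CompleteSpace E] (c : ℂ) {r : ℝ}
    (hr : r ≠ 0) (k : ℤ) (x : E) :
    circleAverage (fun z => (z - c) ^ k • x) c r = if k = 0 then x else 0 := by
  obtain rfl | hk := eq_or_ne k 0
  · simp [circleAverage_const]
  have h_integrand (z : ℂ) (hz : z ∈ Metric.sphere c |r|) :
      (z - c)⁻¹ • (z - c) ^ k • x = (z - c) ^ (k - 1) • x := by
    have hzc : z - c ≠ 0 := sub_ne_zero.mpr (Metric.ne_of_mem_sphere hz (abs_ne_zero.mpr hr))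
    rw [smul_smul, zpow_sub_one₀ hzc, mul_comm]
  rw [← circleAverage_abs_radius, circleAverage_eq_circleIntegral (abs_ne_zero.mpr hr),
    circleIntegral.integral_congr (abs_nonneg r) h_integrand, circleIntegral.integral_smul_const,
    circleIntegral.integral_sub_zpow_of_ne (by lia), zero_smul, smul_zero, if_neg hk]

end CircleAverage

section Parseval

variable {ι κ A : Type*} [NormedRing A] [NormedAlgebra ℂ A] [CompleteSpace A]

lemma hasSum_circleAverage_tsum_zpow_mul_tsum_zpow [Countable ι] [Countable κ]
    (k : ι → ℤ) (l : κ → ℤ) {α : ι → A} {β : κ → A}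
    (hα : Summable (‖α ·‖)) (hβ : Summable (‖β ·‖)) :
    HasSum (fun p : ι × κ => if k p.1 + l p.2 = 0 then α p.1 * β p.2 else 0)
      (circleAverage (fun z => (∑' i, z ^ k i • α i) * ∑' j, z ^ l j • β j) 0 1) := by
  have h_average (p : ι × κ) :
      circleAverage (fun z => z ^ (k p.1 + l p.2) • (α p.1 * β p.2)) 0 1 =
        if k p.1 + l p.2 = 0 then α p.1 * β p.2 else 0 := by
    simpa using circleAverage_sub_zpow_smul 0 one_ne_zero (k p.1 + l p.2) (α p.1 * β p.2)
  have h_bound : Summable fun p : ι × κ => ‖α p.1‖ * ‖β p.2‖ :=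
    hα.mul_of_nonneg hβ (fun _ => norm_nonneg _) (fun _ => norm_nonneg _)
  simp_rw [← h_average]
  refine hasSum_circleAverage_of_summable_bound (bound := fun p : ι × κ => ‖α p.1‖ * ‖β p.2‖)
    (fun p => ?integrable) (fun p z hz => ?norm_le) h_bound (fun z hz => ?hasSum)
  case integrable =>
    refine ContinuousOn.circleIntegrable' fun z hz => ?_
    have hz₀ : z ≠ 0 := Metric.ne_of_mem_sphere hz (by simp)
    exact ((continuousAt_zpow₀ z _ (.inl hz₀)).smul continuousAt_const).continuousWithinAt
  case norm_le =>
    have hz₁ : ‖z‖ = 1 := by simpa using hz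
    simpa [norm_smul, hz₁] using norm_mul_le (α p.1) (β p.2)
  case hasSum =>
    have hz₀ : z ≠ 0 := Metric.ne_of_mem_sphere hz (by simp)
    have hz₁ : ‖z‖ = 1 := by simpa using hz
    have hα_z : Summable fun i => ‖z ^ k i • α i‖ := by simpa [norm_smul, hz₁] using hα
    have hβ_z : Summable fun j => ‖z ^ l j • β j‖ := by simpa [norm_smul, hz₁] using hβ
    simpa only [tsum_mul_tsum_of_summable_norm hα_z hβ_z, smul_mul_smul_comm, zpow_add₀ hz₀]
      using (summable_mul_of_summable_norm hα_z hβ_z).hasSum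

theorem hasSum_mul_circleAverage_tsum_zpow {k : ι → ℤ} (hk : k.Injective) {α β : ι → A}
    (hα : Summable (‖α ·‖)) (hβ : Summable (‖β ·‖)) :
    HasSum (fun i => α i * β i)
      (circleAverage (fun z => (∑' i, z ^ k i • α i) * ∑' j, z ^ (-k j) • β j) 0 1) := by
  classical
  have : Countable ι := hk.countable
  have h_double := hasSum_circleAverage_tsum_zpow_mul_tsum_zpow k (fun j => -k j) hα hβ
  simp only [add_neg_eq_zero, hk.eq_iff] at h_double
  have h_diag : Function.Injective fun i : ι => (i, i) := fun _ _ h => congrArg Prod.fst h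
  rw [← h_diag.hasSum_iff fun p hp => if_neg fun h => hp ⟨p.1, Prod.ext rfl h⟩] at h_double
  simpa [Function.comp_def] using h_double

theorem hadamard_product_integral_general (a b : ℕ → A) (u v : ℂ)
    (ha : Summable fun n => ‖u ^ n • a n‖) (hb : Summable fun n => ‖v ^ n • b n‖) :
    ∑' n, (u * v) ^ n • (a n * b n) =
      (1 / (2 * Real.pi) : ℂ) •
        ∫ t in (0:ℝ)..(2 * Real.pi),
          (∑' n, (u * Complex.exp (Complex.I * t)) ^ n • a n) *
          (∑' n, (v * Complex.exp (-Complex.I * t)) ^ n • b n) := by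
  have h := (hasSum_mul_circleAverage_tsum_zpow Nat.cast_injective ha hb).tsum_eq
  simp only [smul_mul_smul_comm, ← mul_pow] at h
  rw [h, circleAverage_def, ← Complex.coe_smul]
  simp [circleMap_zero, mul_comm u, mul_comm v, mul_pow, mul_smul, mul_comm I, Complex.exp_neg]

end Parseval

/-- Bessel–Parseval type identity for the Hadamard product of two power series:
if `f(x) = ∑ aₙ xⁿ` and `g(x) = ∑ bₙ xⁿ` have real coefficients and converge on the
complex disks of radii `R > 0` and `R' > 0` respectively, then for real `u, v` with
`|u| < R` and `|v| < R'`,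
`∑ aₙ bₙ (uv)ⁿ = (1/(2π)) ∫₀^{2π} f(u e^{it}) g(v e^{-it}) dt`. -/
theorem hadamard_product_integral
    (a b : ℕ → ℝ) (R R' : ℝ) (hR : 0 < R) (hR' : 0 < R')
    (ha : ∀ z : ℂ, ‖z‖ < R → Summable fun n : ℕ => (a n : ℂ) * z ^ n)
    (hb : ∀ z : ℂ, ‖z‖ < R' → Summable fun n : ℕ => (b n : ℂ) * z ^ n)
    (u v : ℝ) (hu : |u| < R) (hv : |v| < R') :
    ((∑' n : ℕ, a n * b n * (u * v) ^ n : ℝ) : ℂ) =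
      (1 / (2 * Real.pi)) *
        ∫ t in (0:ℝ)..(2 * Real.pi),
          (∑' n : ℕ, (a n : ℂ) * ((u : ℂ) * Complex.exp (Complex.I * t)) ^ n) *
          (∑' n : ℕ, (b n : ℂ) * ((v : ℂ) * Complex.exp (-Complex.I * t)) ^ n) := by
  have h := hadamard_product_integral_general (fun n => (a n : ℂ)) (fun n => (b n : ℂ)) u v
    (by simpa [mul_comm] using (ha u (by simpa using hu)).norm)
    (by simpa [mul_comm] using (hb v (by simpa using hv)).norm)
  simpa [Complex.ofReal_tsum, mul_comm] using h
end

section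
/- For every real number x, ∑_{n=0}^∞ x^n/(n!)^2 = (1/(2π)) ∫_0^{2π} e^{(x+1) cos t} cos((x-1) sin t) dt. -/
/-!
Cauchy's formulas say that averaging `f z / z ^ n` over a circle about `0` extracts the `n`-th
Taylor coefficient of `f`. Expanding `exp (x / z)` in powers of `1 / z` and taking `f = exp`, the
average of `exp (z + x / z)` is therefore `∑ xⁿ / (n!)²`. On the unit circle the exponent at
`z = e ^ (it)` is `(x + 1) cos t - i (x - 1) sin t`, and the substitution `z ↦ z⁻¹` flips the sign
of the second term, so symmetrizing turns the oscillating factor into a cosine.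
-/

open Nat Real intervalIntegral

section CircleAverage

open MeasureTheory Metric

variable {ι E : Type*} [NormedAddCommGroup E] {c : ℂ} {R : ℝ} {f : ℂ → E}

theorem circleIntegrable_comp_inv (hf : CircleIntegrable f 0 1) :
    CircleIntegrable (fun z => f z⁻¹) 0 1 := by
  have hperiodic : Function.Periodic (fun t => f (circleMap 0 1 t)) (2 * Real.pi) :=
    (periodic_circleMap 0 1).comp f
  have hneg := (IntervalIntegrable.iff_comp_neg).mp
    (hperiodic.intervalIntegrable₀ two_pi_pos.ne' hf 0 (-(2 * Real.pi)))
  simpa only [CircleIntegrable, circleMap_zero_inv, inv_one, neg_zero, neg_neg] using hneg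

section RealSpace

variable [NormedSpace ℝ E]

theorem circleAverage_zero_one_eq_half_smul_add_inv (hf : CircleIntegrable f 0 1) :
    circleAverage f 0 1 = (2 : ℝ)⁻¹ • circleAverage (fun z => f z + f z⁻¹) 0 1 := by
  rw [circleAverage_fun_add hf (circleIntegrable_comp_inv hf), circleAverage_zero_one_congr_inv,
    ← two_smul ℝ, inv_smul_smul₀ two_ne_zero]

theorem hasSum_circleAverage_of_summable_of_norm_le [Countable ι] {F : ι → ℂ → E} {u : ι → ℝ}
    (hF : ∀ i, CircleIntegrable (F i) c R) (hu : Summable u)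
    (hFu : ∀ i, ∀ z ∈ sphere c |R|, ‖F i z‖ ≤ u i)
    (hf : ∀ z ∈ sphere c |R|, HasSum (fun i => F i z) (f z)) :
    HasSum (fun i => circleAverage (F i) c R) (circleAverage f c R) :=
  (hasSum_integral_of_dominated_convergence (fun i _ => u i)
    (fun i => (hF i).def'.aestronglyMeasurable)
    (fun i => .of_forall fun t _ => hFu i _ (circleMap_mem_sphere' c R t))
    (.of_forall fun _ _ => hu) intervalIntegrable_const
    (.of_forall fun t _ => hf _ (circleMap_mem_sphere' c R t))).const_smul _

end RealSpace

variable [NormedSpace ℂ E] [CompleteSpace E]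

theorem circleAverage_inv_sub_pow_smul (hR : 0 < R) (hf : DiffContOnCl ℂ f (ball c R)) (n : ℕ) :
    circleAverage (fun z => ((z - c) ^ n)⁻¹ • f z) c R = (n ! : ℂ)⁻¹ • iteratedDeriv n f c := by
  have hpow (z : ℂ) : (z - c)⁻¹ • ((z - c) ^ n)⁻¹ • f z = (1 / (z - c) ^ (n + 1)) • f z := by
    rw [smul_smul, one_div, _root_.pow_succ', mul_inv]
  rw [circleAverage_eq_circleIntegral hR.ne']
  simp only [hpow]
  rw [hf.circleIntegral_one_div_sub_center_pow_smul hR, smul_smul, div_eq_mul_inv,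
    inv_mul_cancel_left₀ Complex.two_pi_I_ne_zero]

theorem hasSum_circleAverage_smul_of_hasSum_inv_pow {a : ℕ → ℂ} {g : ℂ → ℂ} (hR : 0 < R)
    (hf : DiffContOnCl ℂ f (ball c R)) (ha : Summable fun n => ‖a n‖ / R ^ n)
    (hg : ∀ z ∈ sphere c R, HasSum (fun n => a n * ((z - c) ^ n)⁻¹) (g z)) :
    HasSum (fun n => (a n / n !) • iteratedDeriv n f c)
      (circleAverage (fun z => g z • f z) c R) := by
  have hf_sphere : ContinuousOn f (sphere c R) :=
    hf.continuousOn_ball.mono sphere_subset_closedBall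
  obtain ⟨C, hC⟩ := (isCompact_sphere c R).exists_bound_of_continuousOn hf_sphere
  have hterm (n : ℕ) : circleAverage (fun z => (a n * ((z - c) ^ n)⁻¹) • f z) c R =
      (a n / n !) • iteratedDeriv n f c := by
    simp only [mul_smul]
    rw [circleAverage_fun_smul, circleAverage_inv_sub_pow_smul hR hf, smul_smul, div_eq_mul_inv]
  simp only [← hterm]
  rw [← abs_of_pos hR] at hg hC
  refine hasSum_circleAverage_of_summable_of_norm_le (fun n => ?_) (ha.mul_right C)
    (fun n z hz => ?_) (fun z hz => (hg z hz).smul_const (f z))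
  · have hz_ne : ∀ z ∈ sphere c R, (z - c) ^ n ≠ 0 := fun z hz =>
      pow_ne_zero n (sub_ne_zero.mpr (ne_of_mem_sphere hz hR.ne'))
    exact ContinuousOn.circleIntegrable hR.le
      ((continuousOn_const.mul (ContinuousOn.inv₀ (by fun_prop) hz_ne)).smul hf_sphere)
  · have hnorm : ‖a n * ((z - c) ^ n)⁻¹‖ = ‖a n‖ / R ^ n := by
      rw [norm_mul, norm_inv, norm_pow, mem_sphere_iff_norm.mp hz, abs_of_pos hR, div_eq_mul_inv]
    rw [norm_smul, hnorm]
    gcongr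
    exact hC z hz

end CircleAverage

theorem hasSum_circleAverage_exp_add_div (x : ℂ) {R : ℝ} (hR : 0 < R) :
    HasSum (fun n : ℕ => x ^ n / (n ! : ℂ) ^ 2)
      (circleAverage (fun z => Complex.exp (z + x / z)) 0 R) := by
  have hsummable : Summable fun n : ℕ => ‖x ^ n / (n ! : ℂ)‖ / R ^ n := by
    refine (NormedSpace.norm_expSeries_div_summable (x / R)).congr fun n => ?_
    rw [div_pow, div_right_comm, norm_div _ ((R : ℂ) ^ n), norm_pow, Complex.norm_of_nonneg hR.le]
  have hexp (z : ℂ) :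
      HasSum (fun n : ℕ => x ^ n / (n ! : ℂ) * ((z - 0) ^ n)⁻¹) (Complex.exp (x / z)) := by
    rw [Complex.exp_eq_exp_ℂ]
    refine (NormedSpace.expSeries_div_hasSum_exp (x / z)).congr_fun fun n => ?_
    rw [sub_zero, div_pow]
    ring
  have h := hasSum_circleAverage_smul_of_hasSum_inv_pow hR Complex.differentiable_exp.diffContOnCl
    hsummable fun z _ => hexp z
  simpa only [iteratedDeriv_eq_iterate, Complex.iter_deriv_exp, Complex.exp_zero, smul_eq_mul,
    mul_one, div_div, ← sq, ← Complex.exp_add, add_comm] using h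

theorem circleMap_add_div_circleMap (x : ℂ) (t : ℝ) :
    circleMap 0 1 t + x / circleMap 0 1 t =
      (x + 1) * Complex.cos t - (x - 1) * Complex.sin t * Complex.I := by
  have hinv : (circleMap 0 1 t)⁻¹ = Complex.cos t - Complex.sin t * Complex.I := by
    rw [circleMap_zero_inv, circleMap_zero, Complex.exp_mul_I]
    push_cast [Complex.cos_neg, Complex.sin_neg]
    ring
  rw [div_eq_mul_inv, hinv, circleMap_zero, Complex.exp_mul_I, Complex.ofReal_one]
  ring

theorem exp_circleMap_add_div_add_exp_inv_add_div_inv (x : ℂ) (t : ℝ) :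
    Complex.exp (circleMap 0 1 t + x / circleMap 0 1 t) +
        Complex.exp ((circleMap 0 1 t)⁻¹ + x / (circleMap 0 1 t)⁻¹) =
      2 * (Complex.exp ((x + 1) * Complex.cos t) * Complex.cos ((x - 1) * Complex.sin t)) := by
  set a := (x + 1) * Complex.cos t
  set b := (x - 1) * Complex.sin t
  have hpos : circleMap 0 1 t + x / circleMap 0 1 t = a + -b * Complex.I := by
    rw [circleMap_add_div_circleMap]
    ring
  have hneg : (circleMap 0 1 t)⁻¹ + x / (circleMap 0 1 t)⁻¹ = a + b * Complex.I := by
    rw [circleMap_zero_inv, inv_one, circleMap_add_div_circleMap, Complex.ofReal_neg,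
      Complex.cos_neg, Complex.sin_neg]
    ring
  calc
    _ = Complex.exp a * (Complex.exp (b * Complex.I) + Complex.exp (-b * Complex.I)) := by
      rw [hpos, hneg, Complex.exp_add, Complex.exp_add, add_comm, mul_add]
    _ = 2 * (Complex.exp a * Complex.cos b) := by
      rw [← Complex.two_cos, mul_left_comm]

theorem circleAverage_exp_add_div (x : ℂ) :
    circleAverage (fun z => Complex.exp (z + x / z)) 0 1 =
      1 / (2 * Real.pi) * ∫ t in (0 : ℝ)..2 * Real.pi,
        Complex.exp ((x + 1) * Complex.cos t) * Complex.cos ((x - 1) * Complex.sin t) := by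
  have hne : ∀ z ∈ Metric.sphere (0 : ℂ) 1, z ≠ 0 := fun z hz =>
    Metric.ne_of_mem_sphere hz one_ne_zero
  have hintegrable : CircleIntegrable (fun z => Complex.exp (z + x / z)) 0 1 :=
    ContinuousOn.circleIntegrable zero_le_one (by fun_prop (disch := assumption))
  rw [circleAverage_zero_one_eq_half_smul_add_inv hintegrable, circleAverage_def]
  simp only [exp_circleMap_add_div_add_exp_inv_add_div_inv]
  rw [intervalIntegral.integral_const_mul, Complex.real_smul, Complex.real_smul]
  push_cast
  ring

theorem alpha_two_integral_general (x : ℂ) :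
    (∑' n : ℕ, x ^ n / (n ! : ℂ) ^ 2) =
      (1 / (2 * Real.pi)) *
        ∫ t in (0 : ℝ)..(2 * Real.pi),
          Complex.exp ((x + 1) * Complex.cos t) * Complex.cos ((x - 1) * Complex.sin t) := by
  rw [(hasSum_circleAverage_exp_add_div x one_pos).tsum_eq, circleAverage_exp_add_div]

/-- For every real `x`, `∑ xⁿ/(n!)² = (1/(2π)) ∫₀^{2π} e^{(x+1)cos t} cos((x-1) sin t) dt`. -/
theorem alpha_two_integral (x : ℝ) :
    (∑' n : ℕ, x ^ n / (n ! : ℝ) ^ 2) =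
      (1 / (2 * Real.pi)) *
        ∫ t in (0:ℝ)..(2 * Real.pi),
          Real.exp ((x + 1) * Real.cos t) * Real.cos ((x - 1) * Real.sin t) := by
  rw [← Complex.ofReal_inj]
  push_cast [← intervalIntegral.integral_ofReal]
  exact alpha_two_integral_general x
end

section
/- ∑_{n=0}^∞ 1/(n!)^2 = (1/(2π)) ∫_0^{2π} e^{2 cos t} dt. -/
/-!
For a power series `f` converging near the circle of radius `r`, the restriction
`θ ↦ f (c + r e^{iθ})` is a uniformly convergent Fourier series with coefficients `aₙ rⁿ`, so
Parseval's identity gives Gutzmer's formula: the average of `|f|²` over the circle is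
`∑ |aₙ|² r^{2n}`. For `f = exp` the coefficients are `1 / n!`, while
`|exp (r e^{iθ})|² = e^{2 r cos θ}`; the radius `r = 1` is the case wanted.
-/

open Nat Real intervalIntegral

open MeasureTheory AddCircle

theorem hasSum_norm_sq_of_orthonormal {𝕜 E ι : Type*} [RCLike 𝕜] [SeminormedAddCommGroup E]
    [InnerProductSpace 𝕜 E] {v : ι → E} (hv : Orthonormal 𝕜 v) {c : ι → 𝕜} {x : E}
    (h : HasSum (fun i ↦ c i • v i) x) : HasSum (fun i ↦ ‖c i‖ ^ 2) (‖x‖ ^ 2) := by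
  have norm_sq_sum (s : Finset ι) : ‖∑ i ∈ s, c i • v i‖ ^ 2 = ∑ i ∈ s, ‖c i‖ ^ 2 := by
    rw [@norm_sq_eq_re_inner 𝕜, hv.inner_sum, map_sum]
    refine Finset.sum_congr rfl fun i _ ↦ ?_
    rw [RCLike.conj_mul, ← RCLike.ofReal_pow, RCLike.ofReal_re]
  exact (h.norm.pow 2).congr norm_sq_sum

theorem norm_sq_toLp_two_eq_integral {X 𝕜 : Type*} [RCLike 𝕜] [TopologicalSpace X]
    [CompactSpace X] [MeasurableSpace X] [BorelSpace X] (μ : Measure X) [IsFiniteMeasure μ]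
    (g : C(X, 𝕜)) : ‖ContinuousMap.toLp (E := 𝕜) 2 μ 𝕜 g‖ ^ 2 = ∫ x, ‖g x‖ ^ 2 ∂μ := by
  rw [@norm_sq_eq_re_inner 𝕜, ContinuousMap.inner_toLp]
  simp only [RCLike.mul_conj]
  norm_cast

theorem hasSum_norm_sq_of_hasSum_fourier {T : ℝ} [Fact (0 < T)] {ι : Type*} {k : ι → ℤ}
    (hk : k.Injective) {c : ι → ℂ} {g : C(AddCircle T, ℂ)}
    (h : HasSum (fun i ↦ c i • fourier (k i)) g) :
    HasSum (fun i ↦ ‖c i‖ ^ 2) (∫ x, ‖g x‖ ^ 2 ∂haarAddCircle) := by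
  rw [← norm_sq_toLp_two_eq_integral]
  refine hasSum_norm_sq_of_orthonormal (orthonormal_fourier.comp k hk) ?_
  simpa using! (ContinuousMap.toLp (E := ℂ) 2 haarAddCircle ℂ).hasSum h

local instance fact_two_pi_pos : Fact (0 < 2 * π) := ⟨two_pi_pos⟩

theorem circleAverage_eq_integral_haarAddCircle {E : Type*} [NormedAddCommGroup E]
    [NormedSpace ℝ E] (f : ℂ → E) (c : ℂ) (r : ℝ) :
    circleAverage f c r = ∫ x : AddCircle (2 * π), f (c + r * x.toCircle) ∂haarAddCircle := by
  rw [integral_haarAddCircle, ← AddCircle.intervalIntegral_preimage (2 * π) 0]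
  simp [circleAverage, circleMap, toCircle]

section PowerSeries

variable {f : ℂ → ℂ} {p : FormalMultilinearSeries ℂ ℂ ℂ} {c : ℂ} {R : ENNReal} {r : ℝ}

theorem summable_coeff_mul_pow_smul_fourier {T : ℝ} [Fact (0 < T)] (hr : ‖r‖ₑ < p.radius) :
    Summable fun n : ℕ ↦ (p.coeff n * r ^ n) • (fourier n : C(AddCircle T, ℂ)) := by
  refine .of_norm ?_
  simpa [norm_smul, fourier_norm, -fourier_apply] using p.summable_norm_mul_pow (r := ‖r‖₊) hr

theorem hasSum_coeff_mul_pow_smul_fourier_apply {T : ℝ} (hf : HasFPowerSeriesOnBall f p c R)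
    (hr : ‖r‖ₑ < R) (x : AddCircle T) :
    HasSum (fun n : ℕ ↦ (p.coeff n * r ^ n) • fourier n x) (f (c + r * x.toCircle)) := by
  have mem_ball : (r * x.toCircle : ℂ) ∈ Metric.eball 0 R := by
    have enorm_eq : ‖(r * x.toCircle : ℂ)‖ₑ = ‖r‖ₑ :=
      enorm_eq_iff_norm_eq.2 (by simp [Circle.norm_coe])
    rwa [mem_eball_zero_iff, enorm_eq]
  refine (hf.hasSum mem_ball).congr_fun fun n ↦ ?_
  simp only [FormalMultilinearSeries.apply_eq_pow_smul_coeff, smul_eq_mul, fourier_apply,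
    natCast_zsmul, toCircle_nsmul, Circle.coe_pow]
  ring

theorem hasSum_norm_sq_coeff_mul_pow_circleAverage (hf : HasFPowerSeriesOnBall f p c R)
    (hr : ‖r‖ₑ < R) :
    HasSum (fun n ↦ ‖p.coeff n‖ ^ 2 * r ^ (2 * n)) (circleAverage (fun z ↦ ‖f z‖ ^ 2) c r) := by
  obtain ⟨g, hg⟩ := summable_coeff_mul_pow_smul_fourier (T := 2 * π) (hr.trans_le hf.r_le)
  have eval_g (x : AddCircle (2 * π)) : g x = f (c + r * x.toCircle) :=
    ((ContinuousMap.evalCLM ℂ x).hasSum hg).unique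
      (hasSum_coeff_mul_pow_smul_fourier_apply hf hr x)
  have norm_sq_term (n : ℕ) : ‖p.coeff n * r ^ n‖ ^ 2 = ‖p.coeff n‖ ^ 2 * r ^ (2 * n) := by
    rw [norm_mul, norm_pow, Complex.norm_real, mul_pow, pow_right_comm, norm_eq_abs, sq_abs,
      pow_mul]
  rw [circleAverage_eq_integral_haarAddCircle]
  simpa only [norm_sq_term, eval_g] using hasSum_norm_sq_of_hasSum_fourier Nat.cast_injective hg

end PowerSeries

theorem norm_sq_exp_circleMap_zero (r t : ℝ) :
    ‖Complex.exp (circleMap 0 r t)‖ ^ 2 = rexp (2 * r * Real.cos t) := by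
  rw [Complex.norm_exp, ← Real.exp_nat_mul]
  simp [circleMap_zero, mul_assoc, Complex.exp_ofReal_mul_I_re]

theorem sum_inv_factorial_sq_integral_general (r : ℝ) :
    HasSum (fun n : ℕ ↦ r ^ (2 * n) / (n ! : ℝ) ^ 2)
      ((1 / (2 * π)) * ∫ t in (0:ℝ)..(2 * π), rexp (2 * r * Real.cos t)) := by
  have gutzmer_exp := hasSum_norm_sq_coeff_mul_pow_circleAverage
    (NormedSpace.exp_hasFPowerSeriesOnBall (𝕂 := ℂ) (𝔸 := ℂ)) (enorm_lt_top (x := r))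
  simp only [NormedSpace.expSeries_eq_ofScalars, FormalMultilinearSeries.coeff_ofScalars,
    ← Complex.exp_eq_exp_ℂ, circleAverage, norm_sq_exp_circleMap_zero] at gutzmer_exp
  simpa [div_eq_inv_mul] using gutzmer_exp

/-- `∑ 1/(n!)² = (1/(2π)) ∫₀^{2π} e^{2 cos t} dt`. -/
theorem sum_inv_factorial_sq_integral :
    (∑' n : ℕ, 1 / (n ! : ℝ) ^ 2) =
      (1 / (2 * Real.pi)) * ∫ t in (0:ℝ)..(2 * Real.pi), Real.exp (2 * Real.cos t) := by
  simpa using (sum_inv_factorial_sq_integral_general 1).tsum_eq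
end

section
/- For all real numbers a and b, (1/(2π)) ∫_{-π}^{π} e^{a cos x + b sin x} dx = ∑_{n=0}^∞ ((a^2 + b^2)/4)^n / (n!)^2; that is, the integral equals I_0(√(a^2+b^2)), where I_0 is the modified Bessel function of the first kind of order zero expressed by its power series I_0(z) = ∑_{n=0}^∞ (z^2/4)^n/(n!)^2. -/
/-!
On the unit circle `z = exp (i x)` the exponent `a cos x + b sin x` becomes `w z + v / z` with
`w = (a - i b) / 2`, `v = (a + i b) / 2`, so that `w v = (a² + b²) / 4`. The average over a circle
only sees the constant term of a Laurent series, and the constant term of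
`exp (w z) * exp (v / z)` is `∑ (wⁿ / n!) (vⁿ / n!)`.
-/

open Nat Real intervalIntegral

section CircleAverage

open Complex MeasureTheory Metric

lemma circleAverage_eq_integral_neg_pi_pi {E : Type*} [NormedAddCommGroup E] [NormedSpace ℝ E]
    (f : ℂ → E) (c : ℂ) (R : ℝ) :
    circleAverage f c R = (2 * π)⁻¹ • ∫ θ in (-π)..π, f (circleMap c R θ) := by
  rw [circleAverage_eq_integral_add (-π),
    integral_comp_add_right (fun θ ↦ f (circleMap c R θ)),
    zero_add, two_mul, add_neg_cancel_right]

variable {c : ℂ} {R : ℝ}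

lemma circleAverage_sub_center_zpow (n : ℤ) (hR : R ≠ 0) :
    circleAverage (fun z ↦ (z - c) ^ n) c R = if n = 0 then 1 else 0 := by
  split_ifs with hn
  · simp [hn, circleAverage_const]
  · have hpow (z : ℂ) : (z - c) ^ n = (z - c) • (z - c) ^ (n - 1) :=
      calc (z - c) ^ n = (z - c) ^ (1 + (n - 1)) := by rw [add_sub_cancel]
        _ = (z - c) • (z - c) ^ (n - 1) := by
          rw [zpow_add' (by simp [hn]), zpow_one, smul_eq_mul]
    simp only [circleAverage_eq_circleIntegral hR, hpow,
      circleIntegral.integral_sub_inv_smul_sub_smul]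
    rw [circleIntegral.integral_sub_zpow_of_ne (by omega), smul_zero]

theorem hasSum_circleAverage_of_summable_norm {E ι : Type*} [NormedAddCommGroup E]
    [NormedSpace ℝ E] [Countable ι] {F : ι → ℂ → E} {f : ℂ → E} {u : ι → ℝ} (hu : Summable u)
    (hF : ∀ i, CircleIntegrable (F i) c R) (hFu : ∀ i, ∀ z ∈ sphere c |R|, ‖F i z‖ ≤ u i)
    (hf : ∀ z ∈ sphere c |R|, HasSum (F · z) (f z)) :
    HasSum (fun i ↦ circleAverage (F i) c R) (circleAverage f c R) :=
  (intervalIntegral.hasSum_integral_of_dominated_convergence (fun i _ ↦ u i)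
    (fun i ↦ IntervalIntegrable.aestronglyMeasurable_restrict_uIoc (hF i))
    (fun i ↦ .of_forall fun θ _ ↦ hFu i _ (circleMap_mem_sphere' c R θ))
    (.of_forall fun _ _ ↦ hu) intervalIntegrable_const
    (.of_forall fun θ _ ↦ hf _ (circleMap_mem_sphere' c R θ))).const_smul _

theorem hasSum_circleAverage_of_hasSum_zpow {ι : Type*} [Countable ι] {a : ι → ℂ} {e : ι → ℤ}
    {f : ℂ → ℂ} (hR : R ≠ 0)
    (hf : ∀ z ∈ sphere c |R|, HasSum (fun i ↦ a i * (z - c) ^ e i) (f z)) :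
    HasSum (fun i ↦ if e i = 0 then a i else 0) (circleAverage f c R) := by
  -- The norm of each term is constant on the circle, so convergence at `c + R` alone gives a
  -- uniform summable bound.
  have hu : Summable fun i ↦ ‖a i‖ * |R| ^ e i := by
    simpa using (hf (c + R) (by simp)).summable.norm
  have hterm_integrable (i : ι) : CircleIntegrable (fun z ↦ a i * (z - c) ^ e i) c R :=
    (circleIntegrable_sub_zpow_iff.2 (by simp [eq_comm (a := (0 : ℝ)), hR])).const_smul
  have hterm_norm (i : ι) (z : ℂ) (hz : z ∈ sphere c |R|) :
      ‖a i * (z - c) ^ e i‖ ≤ ‖a i‖ * |R| ^ e i := by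
    rw [norm_mul, norm_zpow, mem_sphere_iff_norm.1 hz]
  have hterm_average (i : ι) :
      circleAverage (fun z ↦ a i * (z - c) ^ e i) c R = if e i = 0 then a i else 0 := by
    simp only [← smul_eq_mul, circleAverage_fun_smul, circleAverage_sub_center_zpow _ hR]
    rw [smul_eq_mul, mul_ite, mul_one, mul_zero]
  simpa only [hterm_average] using
    hasSum_circleAverage_of_summable_norm hu hterm_integrable hterm_norm hf

theorem hasSum_circleAverage_mul_of_hasSum_pow {f g : ℂ → ℂ} {a b : ℕ → ℂ} (hR : R ≠ 0)
    (hf : ∀ z ∈ sphere c |R|, HasSum (fun n ↦ a n * (z - c) ^ n) (f z))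
    (hg : ∀ z ∈ sphere c |R|, HasSum (fun n ↦ b n * (z - c)⁻¹ ^ n) (g z)) :
    HasSum (fun n ↦ a n * b n) (circleAverage (fun z ↦ f z * g z) c R) := by
  have hfg (z : ℂ) (hz : z ∈ sphere c |R|) :
      HasSum (fun p : ℕ × ℕ ↦ a p.1 * b p.2 * (z - c) ^ (p.1 - p.2 : ℤ)) (f z * g z) := by
    have hzc : z - c ≠ 0 := sub_ne_zero.2 (ne_of_mem_sphere hz (abs_ne_zero.2 hR))
    have hsummable :=
      summable_mul_of_summable_norm (hf z hz).summable.norm (hg z hz).summable.norm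
    have hterm (p : ℕ × ℕ) : a p.1 * b p.2 * (z - c) ^ (p.1 - p.2 : ℤ) =
        a p.1 * (z - c) ^ p.1 * (b p.2 * (z - c)⁻¹ ^ p.2) := by
      rw [zpow_sub₀ hzc, zpow_natCast, zpow_natCast, inv_pow]
      ring
    simpa only [hterm] using (hf z hz).mul (hg z hz) hsummable
  have hsum := hasSum_circleAverage_of_hasSum_zpow hR hfg
  have hdiag : Function.Injective fun n : ℕ ↦ (n, n) := fun m n hmn ↦ congrArg Prod.fst hmn
  rw [← hdiag.hasSum_iff] at hsum
  · simpa only [Function.comp_def, sub_self, if_true] using hsum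
  · rintro ⟨m, n⟩ hmn
    refine if_neg fun hmn_sub ↦ hmn ⟨m, ?_⟩
    simpa [sub_eq_zero] using hmn_sub

theorem hasSum_circleAverage_exp_mul_add_mul_inv (w v : ℂ) (hR : R ≠ 0) :
    HasSum (fun n : ℕ ↦ (w * v) ^ n / (n ! : ℂ) ^ 2)
      (circleAverage (fun z ↦ cexp (w * z + v * z⁻¹)) 0 R) := by
  have hexp (s z : ℂ) : HasSum (fun n : ℕ ↦ s ^ n / n ! * z ^ n) (cexp (s * z)) := by
    simpa only [exp_eq_exp_ℂ, mul_pow, div_mul_eq_mul_div] using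
      NormedSpace.expSeries_div_hasSum_exp (s * z)
  have hcoeff (n : ℕ) : w ^ n / n ! * (v ^ n / n !) = (w * v) ^ n / (n ! : ℂ) ^ 2 := by
    rw [_root_.div_mul_div_comm, mul_pow, sq]
  simpa only [sub_zero, ← Complex.exp_add, hcoeff] using
    hasSum_circleAverage_mul_of_hasSum_pow hR
      (fun z _ ↦ hexp w (z - 0)) (fun z _ ↦ hexp v (z - 0)⁻¹)

lemma mul_circleMap_add_mul_inv_circleMap (a b : ℂ) (x : ℝ) :
    (a - b * I) / 2 * circleMap 0 1 x + (a + b * I) / 2 * (circleMap 0 1 x)⁻¹ =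
      a * Real.cos x + b * Real.sin x := by
  have hz (θ : ℝ) : circleMap 0 1 θ = Real.cos θ + Real.sin θ * I := by
    simp [circleMap_zero, exp_mul_I]
  rw [circleMap_zero_inv, inv_one, hz, hz, Real.cos_neg, Real.sin_neg, ofReal_neg]
  linear_combination (-b * Real.sin x) * I_sq

end CircleAverage

theorem integral_exp_cos_sin_eq_besselI_zero_general (a b : ℂ) :
    HasSum (fun n : ℕ ↦ ((a ^ 2 + b ^ 2) / 4) ^ n / (n ! : ℂ) ^ 2)
      (1 / (2 * π) * ∫ x in (-π)..π, Complex.exp (a * Real.cos x + b * Real.sin x)) := by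
  have hprod : (a - b * Complex.I) / 2 * ((a + b * Complex.I) / 2) = (a ^ 2 + b ^ 2) / 4 := by
    linear_combination (-b ^ 2 / 4) * Complex.I_sq
  have hsum := hasSum_circleAverage_exp_mul_add_mul_inv ((a - b * Complex.I) / 2)
    ((a + b * Complex.I) / 2) one_ne_zero
  simp only [circleAverage_eq_integral_neg_pi_pi, mul_circleMap_add_mul_inv_circleMap, hprod,
    Complex.real_smul] at hsum
  simpa only [Complex.ofReal_inv, Complex.ofReal_mul, Complex.ofReal_ofNat, one_div] using hsum

/-- For all real `a, b`,
`(1/(2π)) ∫_{-π}^{π} e^{a cos x + b sin x} dx = ∑ ((a²+b²)/4)ⁿ/(n!)² = I₀(√(a²+b²))`. -/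
theorem integral_exp_cos_sin_eq_besselI_zero (a b : ℝ) :
    (1 / (2 * Real.pi)) *
        (∫ x in (-Real.pi)..Real.pi, Real.exp (a * Real.cos x + b * Real.sin x)) =
      ∑' n : ℕ, ((a ^ 2 + b ^ 2) / 4) ^ n / (n ! : ℝ) ^ 2 := by
  refine (HasSum.tsum_eq (Complex.hasSum_ofReal.1 ?_)).symm
  simpa [← intervalIntegral.integral_ofReal] using integral_exp_cos_sin_eq_besselI_zero_general a b
end

section
/- For every real number x, ∑_{n=0}^∞ x^n/(n!)^3 = (1/(4π^2)) ∫_0^{2π} ∫_0^{2π} e^{x cos s + cos s cos t + cos t} cos(x sin s − sin s cos t) cos(cos s sin t − sin t) cosh(sin s sin t) ds dt − (1/(4π^2)) ∫_0^{2π} ∫_0^{2π} e^{x cos s + cos s cos t + cos t} sin(x sin s − sin s cos t) sin(cos s sin t − sin t) sinh(sin s sin t) ds dt. -/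
open Nat Real intervalIntegral

/-!
Write `α(z, k) = ∑ zⁿ/(n!)ᵏ`. The power series `α(·, j)` and `α(·, k)` have Hadamard
(coefficientwise) product `α(·, j + k)`, and averaging over the circle computes Hadamard products.
Hence `α(x, 3)` is the average over `s` of `α(x e^{is}, 1) α(e^{-is}, 2)`, where `α(·, 1) = exp`,
and `α(w, 2)` is itself the average over `t` of
`exp (e^{it}) exp (w e^{-it}) = exp ((1 + w) cos t) exp (i (1 - w) sin t)`. Reflecting `t ↦ 2π - t`
replaces the last factor by a cosine, and the real part of the resulting integrand in `s` and `t` is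
the difference of the two stated integrands.
-/

section IntervalIntegrals

variable {E F : Type*} [NormedAddCommGroup E] [NormedSpace ℝ E]
  [NormedAddCommGroup F] [NormedSpace ℝ F] {f g : ℝ → ℝ → E}

lemma integral_eq_zero_of_comp_sub_left_eq_neg {h : ℝ → E} {a b : ℝ}
    (hh : ∀ t, h (a + b - t) = -h t) : ∫ t in a..b, h t = 0 := by
  have hneg : ∫ t in a..b, h t = -∫ t in a..b, h t := by
    rw [← intervalIntegral.integral_neg]
    simpa only [hh, add_sub_cancel_right, add_sub_cancel_left] using
      (integral_comp_sub_left h (a := a) (b := b) (a + b)).symm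
  have := IsAddTorsionFree.of_isTorsionFree ℝ E
  exact self_eq_neg.mp hneg

lemma integral_integral_swap_of_continuous (hf : Continuous (Function.uncurry f)) (a b c d : ℝ) :
    ∫ s in a..b, ∫ t in c..d, f s t = ∫ t in c..d, ∫ s in a..b, f s t := by
  refine MeasureTheory.intervalIntegral_intervalIntegral_swap ?_
  exact (hf.continuousOn.integrableOn_compact (isCompact_uIcc.prod isCompact_uIcc)).mono_set
    (Set.prod_mono Set.uIoc_subset_uIcc Set.uIoc_subset_uIcc)

lemma integral_integral_sub_of_continuous (hf : Continuous (Function.uncurry f))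
    (hg : Continuous (Function.uncurry g)) (a b c d : ℝ) :
    ∫ s in a..b, ∫ t in c..d, (f s t - g s t) =
      (∫ s in a..b, ∫ t in c..d, f s t) - ∫ s in a..b, ∫ t in c..d, g s t := by
  have hinner (s : ℝ) :
      ∫ t in c..d, (f s t - g s t) = (∫ t in c..d, f s t) - ∫ t in c..d, g s t :=
    integral_sub ((hf.uncurry_left s).intervalIntegrable c d)
      ((hg.uncurry_left s).intervalIntegrable c d)
  simp only [hinner]
  exact integral_sub
    ((continuous_parametric_intervalIntegral_of_continuous' hf c d).intervalIntegrable a b)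
    ((continuous_parametric_intervalIntegral_of_continuous' hg c d).intervalIntegrable a b)

lemma integral_integral_clm_comp_comm_of_continuous [CompleteSpace E] [CompleteSpace F]
    (L : E →L[ℝ] F) (hf : Continuous (Function.uncurry f)) (a b c d : ℝ) :
    ∫ s in a..b, ∫ t in c..d, L (f s t) = L (∫ s in a..b, ∫ t in c..d, f s t) := by
  have hinner (s : ℝ) : ∫ t in c..d, L (f s t) = L (∫ t in c..d, f s t) :=
    L.intervalIntegral_comp_comm ((hf.uncurry_left s).intervalIntegrable c d)
  simp only [hinner]
  exact L.intervalIntegral_comp_comm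
    ((continuous_parametric_intervalIntegral_of_continuous' hf c d).intervalIntegrable a b)

end IntervalIntegrals

lemma norm_exp_neg_ofReal_mul_I (t : ℝ) : ‖Complex.exp (-(t * Complex.I))‖ = 1 := by
  simpa only [Complex.ofReal_neg, neg_mul] using Complex.norm_exp_ofReal_mul_I (-t)

lemma integral_exp_pow_mul_exp_neg_pow (n m : ℕ) :
    ∫ t in (0 : ℝ)..(2 * π),
        Complex.exp (t * Complex.I) ^ n * Complex.exp (-(t * Complex.I)) ^ m =
      if n = m then 2 * (π : ℂ) else 0 := by
  have hchar (t : ℝ) : Complex.exp (t * Complex.I) ^ n * Complex.exp (-(t * Complex.I)) ^ m =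
      Complex.exp (((n : ℂ) - m) * Complex.I * t) := by
    rw [← Complex.exp_nat_mul, ← Complex.exp_nat_mul, ← Complex.exp_add]
    ring_nf
  simp only [hchar]
  split_ifs with hnm
  · simp [hnm]
  · have hfreq : ((n : ℂ) - m) * Complex.I ≠ 0 :=
      mul_ne_zero (sub_ne_zero.mpr (Nat.cast_injective.ne hnm)) Complex.I_ne_zero
    have hperiod : Complex.exp (((n : ℂ) - m) * Complex.I * (2 * π : ℝ)) = 1 :=
      Complex.exp_eq_one_iff.mpr ⟨(n : ℤ) - m, by push_cast; ring⟩
    rw [integral_exp_mul_complex hfreq, hperiod]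
    simp

lemma integral_tsum_exp_pow_mul_tsum_exp_neg_pow {a b : ℕ → ℂ}
    (ha : Summable fun n ↦ ‖a n‖) (hb : Summable fun n ↦ ‖b n‖) :
    ∫ t in (0 : ℝ)..(2 * π), (∑' n, a n * Complex.exp (t * Complex.I) ^ n) *
        ∑' n, b n * Complex.exp (-(t * Complex.I)) ^ n =
      2 * π * ∑' n, a n * b n := by
  let term (p : ℕ × ℕ) (t : ℝ) : ℂ :=
    (a p.1 * Complex.exp (t * Complex.I) ^ p.1) * (b p.2 * Complex.exp (-(t * Complex.I)) ^ p.2)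
  have hnorm (p : ℕ × ℕ) (t : ℝ) : ‖term p t‖ = ‖a p.1‖ * ‖b p.2‖ := by
    simp [term, Complex.norm_exp_ofReal_mul_I, norm_exp_neg_ofReal_mul_I]
  have hsum (t : ℝ) : HasSum (term · t) ((∑' n, a n * Complex.exp (t * Complex.I) ^ n) *
      ∑' n, b n * Complex.exp (-(t * Complex.I)) ^ n) := by
    have ha' : Summable fun n ↦ ‖a n * Complex.exp (t * Complex.I) ^ n‖ := by
      simpa [Complex.norm_exp_ofReal_mul_I] using ha
    have hb' : Summable fun n ↦ ‖b n * Complex.exp (-(t * Complex.I)) ^ n‖ := by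
      simpa [norm_exp_neg_ofReal_mul_I] using hb
    rw [tsum_mul_tsum_of_summable_norm ha' hb']
    exact (summable_mul_of_summable_norm ha' hb').hasSum
  have hterm (p : ℕ × ℕ) : ∫ t in (0 : ℝ)..(2 * π), term p t =
      a p.1 * b p.2 * if p.1 = p.2 then 2 * (π : ℂ) else 0 := by
    simp only [term, mul_mul_mul_comm (a p.1), intervalIntegral.integral_const_mul,
      integral_exp_pow_mul_exp_neg_pow]
  have hintegral := hasSum_integral_of_dominated_convergence (μ := MeasureTheory.volume)
    (a := 0) (b := 2 * π) (F := term) (fun p _ ↦ ‖a p.1‖ * ‖b p.2‖)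
    (fun p ↦ Continuous.aestronglyMeasurable (by fun_prop))
    (fun p ↦ .of_forall fun t _ ↦ (hnorm p t).le)
    (.of_forall fun t _ ↦ ha.mul_of_nonneg hb (fun _ ↦ norm_nonneg _) fun _ ↦ norm_nonneg _)
    (by simp)
    (.of_forall fun t _ ↦ hsum t)
  simp only [hterm] at hintegral
  have hdiag : Function.Injective fun n : ℕ ↦ (n, n) := fun _ _ h ↦ congrArg Prod.fst h
  rw [← hdiag.hasSum_iff fun p hp ↦ by
    rw [if_neg fun h ↦ hp ⟨p.1, Prod.ext rfl h⟩, mul_zero]] at hintegral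
  simpa only [Function.comp_def, if_true, tsum_mul_right, mul_comm] using hintegral.tsum_eq.symm

/-- The alpha function `α(z, k) = ∑ zⁿ/(n!)ᵏ` of a complex variable. For `k = 0` it is a geometric
series, with the junk value `0` where that series diverges. -/
noncomputable def alpha (z : ℂ) (k : ℕ) : ℂ := ∑' n : ℕ, z ^ n / (n ! : ℂ) ^ k

lemma alpha_one (z : ℂ) : alpha z 1 = Complex.exp z := by
  simp only [alpha, pow_one, Complex.exp_eq_exp_ℂ, NormedSpace.exp_eq_tsum_div]

lemma alpha_ofReal (x : ℝ) (k : ℕ) :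
    alpha x k = ((∑' n : ℕ, x ^ n / (n ! : ℝ) ^ k : ℝ) : ℂ) := by
  simp only [alpha, Complex.ofReal_tsum, Complex.ofReal_div, Complex.ofReal_pow,
    Complex.ofReal_natCast]

lemma alpha_mul (z w : ℂ) (k : ℕ) :
    alpha (z * w) k = ∑' n : ℕ, z ^ n / (n ! : ℂ) ^ k * w ^ n :=
  tsum_congr fun n ↦ by rw [mul_pow, mul_div_right_comm]

lemma summable_norm_pow_div_factorial_pow (z : ℂ) {k : ℕ} (hk : k ≠ 0) :
    Summable fun n : ℕ ↦ ‖z ^ n / (n ! : ℂ) ^ k‖ := by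
  refine .of_nonneg_of_le (fun _ ↦ norm_nonneg _) (fun n ↦ ?_) (summable_pow_div_factorial ‖z‖)
  have hfactorial : (1 : ℝ) ≤ n ! := mod_cast n.factorial_pos
  rw [norm_div, norm_pow, norm_pow, Complex.norm_natCast]
  gcongr
  exact le_self_pow₀ hfactorial hk

lemma integral_alpha_mul_alpha (z w : ℂ) {j k : ℕ} (hj : j ≠ 0) (hk : k ≠ 0) :
    ∫ t in (0 : ℝ)..(2 * π), alpha (z * Complex.exp (t * Complex.I)) j *
        alpha (w * Complex.exp (-(t * Complex.I))) k =
      2 * π * alpha (z * w) (j + k) := by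
  simp only [alpha_mul z (Complex.exp _), alpha_mul w (Complex.exp _)]
  rw [integral_tsum_exp_pow_mul_tsum_exp_neg_pow (summable_norm_pow_div_factorial_pow z hj)
    (summable_norm_pow_div_factorial_pow w hk)]
  simp only [alpha, _root_.div_mul_div_comm, mul_pow, pow_add]

lemma exp_mul_exp_I_mul_exp_mul_exp_neg_I (z w t : ℂ) :
    Complex.exp (z * Complex.exp (t * Complex.I)) *
        Complex.exp (w * Complex.exp (-(t * Complex.I))) =
      Complex.exp ((z + w) * Complex.cos t) * Complex.cos ((z - w) * Complex.sin t) +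
        Complex.exp ((z + w) * Complex.cos t) * Complex.sin ((z - w) * Complex.sin t) *
          Complex.I := by
  rw [mul_assoc, ← mul_add, ← Complex.exp_mul_I, ← Complex.exp_add, ← Complex.exp_add, ← neg_mul,
    Complex.exp_mul_I, Complex.exp_mul_I, Complex.cos_neg, Complex.sin_neg]
  ring_nf

lemma integral_exp_cos_mul_cos_sin (z w : ℂ) :
    ∫ t in (0 : ℝ)..(2 * π),
        Complex.exp ((z + w) * Complex.cos t) * Complex.cos ((z - w) * Complex.sin t) =
      2 * π * alpha (z * w) 2 := by
  have hodd : ∫ t in (0 : ℝ)..(2 * π), Complex.exp ((z + w) * Complex.cos t) *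
      Complex.sin ((z - w) * Complex.sin t) * Complex.I = 0 :=
    integral_eq_zero_of_comp_sub_left_eq_neg fun t ↦ by
      simp [Complex.cos_two_pi_sub, Complex.sin_two_pi_sub]
  have halpha := integral_alpha_mul_alpha z w one_ne_zero one_ne_zero
  simp only [alpha_one, exp_mul_exp_I_mul_exp_mul_exp_neg_I] at halpha
  rwa [intervalIntegral.integral_add (Continuous.intervalIntegrable (by fun_prop) _ _)
    (Continuous.intervalIntegrable (by fun_prop) _ _), hodd, add_zero] at halpha

/-- The complex integrand whose average over `s, t ∈ [0, 2π]` is `α(z, 3)`: the product of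
`α(z e^{is}, 1)` and the integrand for `α(e^{-is}, 2)` given by `integral_exp_cos_mul_cos_sin`. -/
noncomputable def alphaThreeKernel (z : ℂ) (s t : ℝ) : ℂ :=
  Complex.exp (z * Complex.exp (s * Complex.I)) *
    (Complex.exp ((1 + Complex.exp (-(s * Complex.I))) * Complex.cos t) *
      Complex.cos ((1 - Complex.exp (-(s * Complex.I))) * Complex.sin t))

lemma continuous_uncurry_alphaThreeKernel (z : ℂ) :
    Continuous (Function.uncurry (alphaThreeKernel z)) := by
  unfold Function.uncurry alphaThreeKernel
  fun_prop

lemma integral_integral_alphaThreeKernel (z : ℂ) :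
    ∫ s in (0 : ℝ)..(2 * π), ∫ t in (0 : ℝ)..(2 * π), alphaThreeKernel z s t =
      4 * π ^ 2 * alpha z 3 := by
  have hinner (s : ℝ) : ∫ t in (0 : ℝ)..(2 * π), alphaThreeKernel z s t =
      2 * π * (alpha (z * Complex.exp (s * Complex.I)) 1 *
        alpha (1 * Complex.exp (-(s * Complex.I))) 2) := by
    simp only [alphaThreeKernel, intervalIntegral.integral_const_mul,
      integral_exp_cos_mul_cos_sin, alpha_one]
    ring
  simp only [hinner, intervalIntegral.integral_const_mul,
    integral_alpha_mul_alpha z 1 one_ne_zero two_ne_zero]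
  ring_nf

lemma re_exp_ofReal_add_mul_I_mul_cos (a u v w : ℝ) :
    (Complex.exp (a + u * Complex.I) * Complex.cos (v - w * Complex.I)).re =
      Real.exp a * Real.cos u * Real.cos v * Real.cosh w -
        Real.exp a * Real.sin u * Real.sin v * Real.sinh w := by
  have hcos : Complex.cos (v - w * Complex.I) =
      (Real.cos v * Real.cosh w : ℝ) + (Real.sin v * Real.sinh w : ℝ) * Complex.I := by
    rw [Complex.cos_sub, Complex.cos_mul_I, Complex.sin_mul_I]
    push_cast
    ring
  rw [hcos, Complex.exp_add, ← Complex.ofReal_exp, mul_assoc, Complex.re_ofReal_mul,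
    Complex.mul_re, Complex.exp_ofReal_mul_I_re, Complex.exp_ofReal_mul_I_im]
  simp only [Complex.add_re, Complex.add_im, Complex.re_ofReal_mul, Complex.im_ofReal_mul,
    Complex.ofReal_re, Complex.ofReal_im, Complex.I_re, Complex.I_im]
  ring

lemma re_alphaThreeKernel_ofReal (x s t : ℝ) :
    (alphaThreeKernel x s t).re =
      Real.exp (x * Real.cos s + Real.cos s * Real.cos t + Real.cos t) *
          Real.cos (x * Real.sin s - Real.sin s * Real.cos t) *
          Real.cos (Real.cos s * Real.sin t - Real.sin t) *
          Real.cosh (Real.sin s * Real.sin t) -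
        Real.exp (x * Real.cos s + Real.cos s * Real.cos t + Real.cos t) *
          Real.sin (x * Real.sin s - Real.sin s * Real.cos t) *
          Real.sin (Real.cos s * Real.sin t - Real.sin t) *
          Real.sinh (Real.sin s * Real.sin t) := by
  rw [← re_exp_ofReal_add_mul_I_mul_cos, alphaThreeKernel, ← mul_assoc, ← Complex.exp_add,
    ← Complex.cos_neg (_ * Complex.sin t), ← neg_mul (s : ℂ), Complex.exp_mul_I,
    Complex.exp_mul_I, Complex.cos_neg, Complex.sin_neg]
  push_cast
  ring_nf

lemma integral_integral_re_alphaThreeKernel (x : ℝ) :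
    ∫ t in (0 : ℝ)..(2 * π), ∫ s in (0 : ℝ)..(2 * π), (alphaThreeKernel x s t).re =
      4 * π ^ 2 * ∑' n : ℕ, x ^ n / (n ! : ℝ) ^ 3 := by
  have hcont := continuous_uncurry_alphaThreeKernel x
  calc ∫ t in (0 : ℝ)..(2 * π), ∫ s in (0 : ℝ)..(2 * π), (alphaThreeKernel x s t).re
    _ = ∫ s in (0 : ℝ)..(2 * π), ∫ t in (0 : ℝ)..(2 * π), (alphaThreeKernel x s t).re :=
      (integral_integral_swap_of_continuous (f := fun s t ↦ (alphaThreeKernel x s t).re)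
        (Complex.continuous_re.comp hcont) _ _ _ _).symm
    _ = (∫ s in (0 : ℝ)..(2 * π), ∫ t in (0 : ℝ)..(2 * π), alphaThreeKernel x s t).re :=
      integral_integral_clm_comp_comm_of_continuous Complex.reCLM hcont _ _ _ _
    _ = ((4 * π ^ 2 * ∑' n : ℕ, x ^ n / (n ! : ℝ) ^ 3 : ℝ) : ℂ).re := by
      rw [integral_integral_alphaThreeKernel, alpha_ofReal]
      norm_cast
    _ = 4 * π ^ 2 * ∑' n : ℕ, x ^ n / (n ! : ℝ) ^ 3 := Complex.ofReal_re _

/-- Real form of the double-integral identity for `∑ xⁿ/(n!)³`. -/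
theorem alpha_three_real_double_integral (x : ℝ) :
    (∑' n : ℕ, x ^ n / (n ! : ℝ) ^ 3) =
      (1 / (4 * Real.pi ^ 2)) *
        (∫ t in (0:ℝ)..(2 * Real.pi), ∫ s in (0:ℝ)..(2 * Real.pi),
          Real.exp (x * Real.cos s + Real.cos s * Real.cos t + Real.cos t) *
            Real.cos (x * Real.sin s - Real.sin s * Real.cos t) *
            Real.cos (Real.cos s * Real.sin t - Real.sin t) *
            Real.cosh (Real.sin s * Real.sin t)) -
      (1 / (4 * Real.pi ^ 2)) *
        (∫ t in (0:ℝ)..(2 * Real.pi), ∫ s in (0:ℝ)..(2 * Real.pi),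
          Real.exp (x * Real.cos s + Real.cos s * Real.cos t + Real.cos t) *
            Real.sin (x * Real.sin s - Real.sin s * Real.cos t) *
            Real.sin (Real.cos s * Real.sin t - Real.sin t) *
            Real.sinh (Real.sin s * Real.sin t)) := by
  rw [← mul_sub, ← integral_integral_sub_of_continuous
    (by unfold Function.uncurry; fun_prop) (by unfold Function.uncurry; fun_prop)]
  simp only [← re_alphaThreeKernel_ofReal]
  rw [integral_integral_re_alphaThreeKernel]
  have := pi_ne_zero
  field_simp
end

section
/- The function y(x) = ∑_{n=0}^∞ x^n/(n!)^2 satisfies the second-order linear differential equation x·y''(x) + y'(x) − y(x) = 0 for all real x. -/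
open Nat Real

/-!
On power series in `x`, `d/dx` sends the coefficients `c n` to `(n + 1) c (n + 1)` and `x d/dx`
multiplies the `n`-th coefficient by `n`. Hence `x y'' + y' = (x d/dx + 1) y'` has coefficients
`(n + 1)² c (n + 1)`, which is `c n` when `c n = 1 / (n!)²`.
-/

open FormalMultilinearSeries

section PowerSeries

variable {𝕜 F : Type*} [NontriviallyNormedField 𝕜] [NormedAddCommGroup F] [NormedSpace 𝕜 F]
  {p : FormalMultilinearSeries 𝕜 𝕜 F} {f : 𝕜 → F} {a x : 𝕜} {r : ENNReal}

lemma hasSum_pow_smul_coeff (hf : HasFPowerSeriesOnBall f p a r) (hx : x ∈ Metric.eball 0 r) :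
    HasSum (fun n ↦ x ^ n • p.coeff n) (f (a + x)) := by
  simpa only [apply_eq_pow_smul_coeff] using hf.hasSum hx

/-- The termwise derivative of a power series in one variable. Unlike `derivSeries`, whose values
are linear maps `𝕜 →L[𝕜] F`, it has values in `F`, by evaluating these maps at `1`. -/
noncomputable def termwiseDeriv (p : FormalMultilinearSeries 𝕜 𝕜 F) :
    FormalMultilinearSeries 𝕜 𝕜 F :=
  (ContinuousLinearMap.apply 𝕜 F 1).compFormalMultilinearSeries p.derivSeries

lemma coeff_termwiseDeriv (p : FormalMultilinearSeries 𝕜 𝕜 F) (n : ℕ) :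
    (termwiseDeriv p).coeff n = (n + 1) • p.coeff (n + 1) :=
  p.derivSeries_coeff_one n

variable [CompleteSpace F]

lemma hasFPowerSeriesOnBall_deriv (hf : HasFPowerSeriesOnBall f p a r) :
    HasFPowerSeriesOnBall (deriv f) (termwiseDeriv p) a r :=
  (ContinuousLinearMap.apply 𝕜 F (1 : 𝕜)).comp_hasFPowerSeriesOnBall hf.fderiv

lemma hasSum_smul_deriv (hf : HasFPowerSeriesOnBall f p a r) (hx : x ∈ Metric.eball 0 r) :
    HasSum (fun n ↦ x ^ n • n • p.coeff n) (x • deriv f (a + x)) := by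
  have hderiv := hasSum_pow_smul_coeff (hasFPowerSeriesOnBall_deriv hf) hx
  rw [← hasSum_nat_add_iff' 1]
  simpa [coeff_termwiseDeriv, smul_smul, ← _root_.pow_succ'] using hderiv.const_smul x

lemma hasSum_smul_deriv_deriv_add_deriv (hf : HasFPowerSeriesOnBall f p a r)
    (hx : x ∈ Metric.eball 0 r) :
    HasSum (fun n ↦ x ^ n • (n + 1) ^ 2 • p.coeff (n + 1))
      (x • deriv (deriv f) (a + x) + deriv f (a + x)) := by
  have hf' := hasFPowerSeriesOnBall_deriv hf
  refine ((hasSum_smul_deriv hf' hx).add (hasSum_pow_smul_coeff hf' hx)).congr_fun fun n ↦ ?_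
  rw [coeff_termwiseDeriv, ← smul_add, ← succ_nsmul, sq, mul_smul]

end PowerSeries

lemma succ_pow_nsmul_inv_factorial_pow {K : Type*} [Field K] [CharZero K] (s n : ℕ) :
    (n + 1) ^ s • (((n + 1)! : K) ^ s)⁻¹ = ((n ! : K) ^ s)⁻¹ := by
  have hn : (n : K) + 1 ≠ 0 := n.cast_add_one_ne_zero
  rw [nsmul_eq_mul, Nat.factorial_succ, Nat.cast_mul, mul_pow]
  push_cast
  field_simp

section Alpha

variable {𝕜 : Type*} [RCLike 𝕜]

lemma radius_ofScalars_inv_factorial_pow {s : ℕ} (hs : s ≠ 0) :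
    (ofScalars 𝕜 fun n ↦ ((n ! : 𝕜) ^ s)⁻¹).radius = ⊤ := by
  refine ofScalars_radius_eq_top_of_tendsto 𝕜 _ (.of_forall fun n ↦ ?_) ?_
  · exact inv_ne_zero (pow_ne_zero s (Nat.cast_ne_zero.2 n.factorial_ne_zero))
  · have hratio (n : ℕ) : ‖(((n + 1)! : 𝕜) ^ s)⁻¹‖ / ‖((n ! : 𝕜) ^ s)⁻¹‖ =
        (1 / ((n : ℝ) + 1)) ^ s := by
      simp only [norm_inv, norm_pow, RCLike.norm_natCast]
      rw [Nat.factorial_succ, Nat.cast_mul, mul_pow, Nat.cast_succ, one_div_pow]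
      field_simp
    simpa only [Nat.succ_eq_add_one, hratio, zero_pow hs] using
      (tendsto_one_div_add_atTop_nhds_zero_nat (𝕜 := ℝ)).pow s

lemma hasFPowerSeriesOnBall_tsum_pow_div_factorial_pow {s : ℕ} (hs : s ≠ 0) :
    HasFPowerSeriesOnBall (fun z : 𝕜 ↦ ∑' n : ℕ, z ^ n / (n ! : 𝕜) ^ s)
      (ofScalars 𝕜 fun n ↦ ((n ! : 𝕜) ^ s)⁻¹) 0 ⊤ := by
  have hradius := radius_ofScalars_inv_factorial_pow (𝕜 := 𝕜) hs
  rw [← hradius]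
  refine (FormalMultilinearSeries.hasFPowerSeriesOnBall _ (hradius ▸ ENNReal.zero_lt_top)).congr
    fun z _ ↦ tsum_congr fun n ↦ ?_
  rw [ofScalars_apply_eq, smul_eq_mul, div_eq_inv_mul]

theorem alpha_two_ode_general (x : 𝕜) :
    x * deriv (deriv (fun x : 𝕜 ↦ ∑' n : ℕ, x ^ n / (n ! : 𝕜) ^ 2)) x +
        deriv (fun x : 𝕜 ↦ ∑' n : ℕ, x ^ n / (n ! : 𝕜) ^ 2) x -
        (∑' n : ℕ, x ^ n / (n ! : 𝕜) ^ 2) = 0 := by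
  have hy := hasFPowerSeriesOnBall_tsum_pow_div_factorial_pow (𝕜 := 𝕜) two_ne_zero
  have hx : x ∈ Metric.eball 0 ⊤ := by simp
  have hsum := hasSum_pow_smul_coeff hy hx
  have hode := hasSum_smul_deriv_deriv_add_deriv hy hx
  simp only [coeff_ofScalars, succ_pow_nsmul_inv_factorial_pow, zero_add] at hode hsum
  exact sub_eq_zero.2 (hode.unique hsum)

end Alpha

/-- `y(x) = ∑ xⁿ/(n!)²` satisfies `x y'' + y' - y = 0`. -/
theorem alpha_two_ode (x : ℝ) :
    x * deriv (deriv (fun x : ℝ => ∑' n : ℕ, x ^ n / (n ! : ℝ) ^ 2)) x +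
        deriv (fun x : ℝ => ∑' n : ℕ, x ^ n / (n ! : ℝ) ^ 2) x -
        (∑' n : ℕ, x ^ n / (n ! : ℝ) ^ 2) = 0 :=
  alpha_two_ode_general x
end
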